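/- arXiv:2007.01580 — 5 statements merged into one kernel-verified Lean document; each statement's English description precedes it below -/
import Mathlib

section
/- Let d ≥ 2 and consider the NTK recursion with bias parameter β = 0. Then the bias-free NTK is homogeneous of order 1: for all nonzero x, z ∈ ℝ^d and every h ≥ 0, Θ⁽ʰ⁾(x,z) = ‖x‖·‖z‖·Θ⁽ʰ⁾(x/‖x‖, z/‖z‖). -/
open Real MeasureTheory
open scoped RealInnerProductSpace

/-- The covariance `Σ⁽ʰ⁾` in the NTK recursion for fully connected ReLU networks. -/
noncomputable def ntkSigma (d : ℕ) : ℕ → EuclideanSpace ℝ (Fin d) → EuclideanSpace ℝ (Fin d) → ℝ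
  | 0, x, z => ⟪x, z⟫
  | h + 1, x, z =>
      (1 / Real.pi) *
          ((ntkSigma d h x z / Real.sqrt (ntkSigma d h x x * ntkSigma d h z z)) *
              (Real.pi -
                Real.arccos (ntkSigma d h x z / Real.sqrt (ntkSigma d h x x * ntkSigma d h z z))) +
            Real.sqrt
              (1 - (ntkSigma d h x z / Real.sqrt (ntkSigma d h x x * ntkSigma d h z z)) ^ 2)) *
        Real.sqrt (ntkSigma d h x x * ntkSigma d h z z)

/-- The normalized covariance `λ⁽ʰ⁾` in the NTK recursion. -/
noncomputable def ntkLam (d : ℕ) (h : ℕ) (x z : EuclideanSpace ℝ (Fin d)) : ℝ :=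
  ntkSigma d h x z / Real.sqrt (ntkSigma d h x x * ntkSigma d h z z)

/-- The derivative covariance `Σ̇⁽ʰ⁾` in the NTK recursion (meaningful for `h ≥ 1`). -/
noncomputable def ntkSigmaDot (d : ℕ) (h : ℕ) (x z : EuclideanSpace ℝ (Fin d)) : ℝ :=
  (1 / Real.pi) * (Real.pi - Real.arccos (ntkLam d (h - 1) x z))

/-- The NTK recursion `Θ⁽ʰ⁾` with bias parameter `β` (bias initialized at zero).
The NTK of an `L`-layer fully connected ReLU network is `k^{FC_β(L)} = Θ⁽ᴸ⁻¹⁾`. -/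
noncomputable def ntkTheta (d : ℕ) (β : ℝ) :
    ℕ → EuclideanSpace ℝ (Fin d) → EuclideanSpace ℝ (Fin d) → ℝ
  | 0, x, z => ⟪x, z⟫ + β ^ 2
  | h + 1, x, z =>
      ntkTheta d β h x z * ntkSigmaDot d (h + 1) x z + ntkSigma d (h + 1) x z + β ^ 2

theorem ntk_sqrt_scale (a b s t : ℝ) (ha : 0 < a) (hb : 0 < b) :
    Real.sqrt ((a * a * s) * (b * b * t)) = a * b * Real.sqrt (s * t) := by
  have h : (a * a * s) * (b * b * t) = (a * b) ^ 2 * (s * t) := by ring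
  rw [h, Real.sqrt_mul (sq_nonneg _), Real.sqrt_sq (by positivity)]

theorem ntkSigma_scale (d : ℕ) (h : ℕ) : ∀ (a b : ℝ) (x z : EuclideanSpace ℝ (Fin d)),
    0 < a → 0 < b → ntkSigma d h (a • x) (b • z) = a * b * ntkSigma d h x z := by
  induction h with
  | zero =>
    intro a b x z _ _
    simp only [ntkSigma, real_inner_smul_left, real_inner_smul_right]
    ring
  | succ h ih =>
    intro a b x z ha hb
    simp only [ntkSigma]
    rw [ih a b x z ha hb, ih a a x x ha ha, ih b b z z hb hb, ntk_sqrt_scale a b _ _ ha hb,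
      mul_div_mul_left _ _ (mul_pos ha hb).ne']
    ring

theorem ntkTheta_scale (d : ℕ) (h : ℕ) (a b : ℝ) (x z : EuclideanSpace ℝ (Fin d))
    (ha : 0 < a) (hb : 0 < b) : ntkTheta d 0 h (a • x) (b • z) = a * b * ntkTheta d 0 h x z := by
  induction h with
  | zero =>
    simp only [ntkTheta, real_inner_smul_left, real_inner_smul_right]
    ring
  | succ h ih =>
    have hl : ntkSigmaDot d (h + 1) (a • x) (b • z) = ntkSigmaDot d (h + 1) x z := by
      simp only [ntkSigmaDot, ntkLam]
      rw [ntkSigma_scale d _ a b x z ha hb, ntkSigma_scale d _ a a x x ha ha,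
        ntkSigma_scale d _ b b z z hb hb, ntk_sqrt_scale a b _ _ ha hb,
        mul_div_mul_left _ _ (mul_pos ha hb).ne']
    simp only [ntkTheta]
    rw [ih, hl, ntkSigma_scale d _ a b x z ha hb]
    ring

/-- The bias-free NTK (`β = 0`) is homogeneous of order 1: for all nonzero
`x, z ∈ ℝ^d` and every `h ≥ 0`, `Θ⁽ʰ⁾(x,z) = ‖x‖·‖z‖·Θ⁽ʰ⁾(x/‖x‖, z/‖z‖)`. -/
theorem ntk_biasfree_homogeneous_order_one (d : ℕ) (hd : 2 ≤ d)
    (x z : EuclideanSpace ℝ (Fin d)) (hx : x ≠ 0) (hz : z ≠ 0) (h : ℕ) :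
    ntkTheta d 0 h x z = ‖x‖ * ‖z‖ * ntkTheta d 0 h (‖x‖⁻¹ • x) (‖z‖⁻¹ • z) := by
  have hx' : 0 < ‖x‖ := norm_pos_iff.mpr hx
  have hz' : 0 < ‖z‖ := norm_pos_iff.mpr hz
  rw [ntkTheta_scale d h _ _ x z (inv_pos.mpr hx') (inv_pos.mpr hz')]
  field_simp
end

section
/- Let d ≥ 2, β ≥ 0 and L ≥ 2. Let Θ_β⁽ʰ⁾ denote the NTK recursion with bias parameter β and Θ_0⁽ʰ⁾ the same recursion with bias parameter 0, and define the bias kernel k^{Bias(L)}(x,z) = Θ_β⁽ᴸ⁻¹⁾(x,z) − Θ_0⁽ᴸ⁻¹⁾(x,z). Then k^{Bias(L)} is homogeneous of order 0: for all nonzero x, z ∈ ℝ^d, k^{Bias(L)}(x,z) = k^{Bias(L)}(x/‖x‖, z/‖z‖). -/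
open Real MeasureTheory
open scoped RealInnerProductSpace

theorem ntkSigma_smul_aux (d : ℕ) (h : ℕ) :
    ∀ c e : ℝ, 0 < c → 0 < e → ∀ x z : EuclideanSpace ℝ (Fin d),
      ntkSigma d h (c • x) (e • z) = c * e * ntkSigma d h x z ∧
      Real.sqrt (ntkSigma d h (c • x) (c • x) * ntkSigma d h (e • z) (e • z)) =
        c * e * Real.sqrt (ntkSigma d h x x * ntkSigma d h z z) := by
  have key : ∀ h : ℕ, (∀ c e : ℝ, 0 < c → 0 < e → ∀ x z : EuclideanSpace ℝ (Fin d),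
      ntkSigma d h (c • x) (e • z) = c * e * ntkSigma d h x z) →
      ∀ c e : ℝ, 0 < c → 0 < e → ∀ x z : EuclideanSpace ℝ (Fin d),
      Real.sqrt (ntkSigma d h (c • x) (c • x) * ntkSigma d h (e • z) (e • z)) =
        c * e * Real.sqrt (ntkSigma d h x x * ntkSigma d h z z) := by
    intro h H c e hc he x z
    rw [H c c hc hc, H e e he he,
      show c * c * ntkSigma d h x x * (e * e * ntkSigma d h z z) =
        (c * e) ^ 2 * (ntkSigma d h x x * ntkSigma d h z z) by ring,
      Real.sqrt_mul (sq_nonneg _), Real.sqrt_sq (by positivity)]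
  have main : ∀ c e : ℝ, 0 < c → 0 < e → ∀ x z : EuclideanSpace ℝ (Fin d),
      ntkSigma d h (c • x) (e • z) = c * e * ntkSigma d h x z := by
    induction h with
    | zero =>
      intro c e hc he x z
      simp only [ntkSigma, real_inner_smul_left, real_inner_smul_right]
      ring
    | succ n ih =>
      intro c e hc he x z
      have hce : c * e ≠ 0 := by positivity
      simp only [ntkSigma]
      rw [key n ih c e hc he, ih c e hc he, mul_div_mul_left _ _ hce]
      ring
  exact fun c e hc he x z => ⟨main c e hc he x z, key h main c e hc he x z⟩

theorem ntkLam_smul_aux (d h : ℕ) (c e : ℝ) (hc : 0 < c) (he : 0 < e)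
    (x z : EuclideanSpace ℝ (Fin d)) :
    ntkLam d h (c • x) (e • z) = ntkLam d h x z := by
  obtain ⟨h1, h2⟩ := ntkSigma_smul_aux d h c e hc he x z
  have hce : c * e ≠ 0 := by positivity
  rw [ntkLam, ntkLam, h1, h2, mul_div_mul_left _ _ hce]

theorem ntkTheta_smul_aux (d : ℕ) (β : ℝ) (h : ℕ) (c e : ℝ) (hc : 0 < c) (he : 0 < e)
    (x z : EuclideanSpace ℝ (Fin d)) :
    ntkTheta d β h x z - ntkTheta d 0 h x z =
      ntkTheta d β h (c • x) (e • z) - ntkTheta d 0 h (c • x) (e • z) := by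
  induction h with
  | zero => simp [ntkTheta]
  | succ n ih =>
    simp only [ntkTheta]
    have hd : ntkSigmaDot d (n + 1) (c • x) (e • z) = ntkSigmaDot d (n + 1) x z := by
      simp only [ntkSigmaDot, ntkLam_smul_aux d _ c e hc he]
    rw [hd]
    linear_combination ntkSigmaDot d (n + 1) x z * ih

/-- The bias kernel `k^{Bias(L)} = Θ_β⁽ᴸ⁻¹⁾ − Θ_0⁽ᴸ⁻¹⁾` is homogeneous of order 0:
for all nonzero `x, z ∈ ℝ^d`, `k^{Bias(L)}(x,z) = k^{Bias(L)}(x/‖x‖, z/‖z‖)`. -/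
theorem ntk_bias_kernel_homogeneous_order_zero (d : ℕ) (hd : 2 ≤ d) (β : ℝ) (hβ : 0 ≤ β)
    (L : ℕ) (hL : 2 ≤ L) (x z : EuclideanSpace ℝ (Fin d)) (hx : x ≠ 0) (hz : z ≠ 0) :
    ntkTheta d β (L - 1) x z - ntkTheta d 0 (L - 1) x z =
      ntkTheta d β (L - 1) (‖x‖⁻¹ • x) (‖z‖⁻¹ • z) -
        ntkTheta d 0 (L - 1) (‖x‖⁻¹ • x) (‖z‖⁻¹ • z) := by
  exact ntkTheta_smul_aux d β (L - 1) _ _ (inv_pos.mpr (norm_pos_iff.mpr hx))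
    (inv_pos.mpr (norm_pos_iff.mpr hz)) x z
end

section
/- Let λ ∈ (−1, 1). Then the bivariate Gaussian expectation of the product of ReLUs admits the closed form: (1/(2π√(1−λ²))) · ∫_{ℝ²} max(u,0)·max(v,0)·exp(−(u² − 2λuv + v²)/(2(1−λ²))) du dv = (λ·(π − arccos λ) + √(1 − λ²))/(2π). -/
open Real MeasureTheory

/-- inner radial integral -/
lemma acK_inner {b : ℝ} (hb : 0 < b) :
    ∫⁻ u in Set.Ioi (0:ℝ), ENNReal.ofReal (u ^ 3 * Real.exp (-b * u ^ 2)) =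
      ENNReal.ofReal (1 / (2 * b ^ 2)) := by
  have h1 := integral_rpow_mul_exp_neg_mul_rpow (p := 2) (q := 3) (b := b) (by norm_num)
    (by norm_num) hb
  have h2 := integrableOn_rpow_mul_exp_neg_mul_rpow (p := 2) (s := 3) (b := b) (by norm_num)
    (by norm_num) hb
  have e : ∀ u : ℝ, u ^ (3:ℝ) * Real.exp (-b * u ^ (2:ℝ)) = u ^ 3 * Real.exp (-b * u ^ 2) := by
    intro u
    norm_cast
  simp only [e] at h1 h2
  rw [← ofReal_integral_eq_lintegral_ofReal h2, h1]
  · congr 1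
    have : ((3:ℝ) + 1) / 2 = (1:ℕ) + 1 := by norm_num
    rw [this, Real.Gamma_nat_eq_factorial]
    have h3 : b ^ (-((1:ℕ) + 1) : ℝ) = (b ^ 2)⁻¹ := by
      rw [Real.rpow_neg hb.le]
      norm_num
    have h4 : (-((3:ℝ) + 1) / 2) = (-((1:ℕ) + 1) : ℝ) := by norm_num
    rw [h4, h3]
    field_simp
    norm_num
  · filter_upwards [ae_restrict_mem measurableSet_Ioi] with u hu
    have : (0:ℝ) < u := hu
    simp only [Pi.zero_apply]
    positivity

lemma acK_outer {l s : ℝ} (hs : 0 < s) (hls : l ^ 2 + s ^ 2 = 1) :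
    ∫⁻ t in Set.Ioi (0:ℝ), ENNReal.ofReal (t / (1 - 2 * l * t + t ^ 2) ^ 2) =
      ENNReal.ofReal (1 / (2 * s ^ 2) + l * (π / 2 + Real.arctan (l / s)) / (2 * s ^ 3)) ∧
    0 ≤ 1 / (2 * s ^ 2) + l * (π / 2 + Real.arctan (l / s)) / (2 * s ^ 3) := by
  have hD : ∀ t : ℝ, 0 < 1 - 2 * l * t + t ^ 2 := fun t => by nlinarith [sq_nonneg (t - l)]
  let F : ℝ → ℝ := fun t => (l * (t - l) / s ^ 2 - 1) / (2 * (1 - 2 * l * t + t ^ 2)) +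
    l * Real.arctan ((t - l) / s) / (2 * s ^ 3)
  have hF : ∀ t ∈ Set.Ici (0:ℝ), HasDerivAt F (t / (1 - 2 * l * t + t ^ 2) ^ 2) t := by
    intro t _
    have a1 : HasDerivAt (fun t : ℝ => t - l) 1 t := (hasDerivAt_id t).sub_const l
    have a2 : HasDerivAt (fun t : ℝ => 1 - 2 * l * t + t ^ 2) (-(2 * l) + 2 * t) t := by
      have := (((hasDerivAt_id t).const_mul (2 * l)).const_sub 1).add (hasDerivAt_pow 2 t)
      refine this.congr_deriv ?_
      norm_num
    have a3 := (((a1.const_mul l).div_const (s ^ 2)).sub_const 1).div (a2.const_mul 2)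
      (by have := hD t; positivity)
    have a4 := (((a1.div_const s).arctan).const_mul l).div_const (2 * s ^ 3)
    have a5 := a3.add a4
    refine a5.congr_deriv ?_
    have hDt := (hD t).ne'
    have e : 1 + ((t - l) / s) ^ 2 = (1 - 2 * l * t + t ^ 2) / s ^ 2 := by
      field_simp
      linear_combination hls
    rw [e]
    generalize hX : 1 - 2 * l * t + t ^ 2 = X at *
    field_simp
    have hs2 : s ^ 2 = 1 - l ^ 2 := by linarith
    rw [hs2, ← hX]
    ring
  have hpos : ∀ t ∈ Set.Ioi (0:ℝ), 0 ≤ t / (1 - 2 * l * t + t ^ 2) ^ 2 := by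
    intro t ht
    have : (0:ℝ) < t := ht
    positivity
  have hlim : Filter.Tendsto F Filter.atTop (nhds (0 + l * (π / 2) / (2 * s ^ 3))) := by
    have hat : Filter.Tendsto (fun t : ℝ => t - l) Filter.atTop Filter.atTop :=
      Filter.tendsto_atTop_add_const_right _ (-l) Filter.tendsto_id
    apply Filter.Tendsto.add
    · -- substitute w = t - l
      have h1 : Filter.Tendsto (fun w : ℝ => (l / s ^ 2 - w⁻¹) / (2 * (w + s ^ 2 * w⁻¹)))
          Filter.atTop (nhds 0) := by
        have i0 : Filter.Tendsto (fun w : ℝ => w⁻¹) Filter.atTop (nhds 0) := tendsto_inv_atTop_zero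
        refine Filter.Tendsto.div_atTop (a := l / s ^ 2 - 0) (tendsto_const_nhds.sub i0) ?_
        apply Filter.Tendsto.const_mul_atTop (by norm_num)
        exact Filter.Tendsto.atTop_add Filter.tendsto_id (i0.const_mul (s ^ 2))
      refine (h1.comp hat).congr' ?_
      filter_upwards [hat.eventually_gt_atTop 0] with t ht
      have e : 1 - 2 * l * t + t ^ 2 = (t - l) ^ 2 + s ^ 2 := by linear_combination -hls
      simp only [Function.comp]
      rw [e]
      generalize t - l = w at *
      field_simp
    · refine Filter.Tendsto.div_const (Filter.Tendsto.const_mul l ?_) _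
      have h5 : Filter.Tendsto Real.arctan Filter.atTop (nhds (π / 2)) :=
        Real.tendsto_arctan_atTop.mono_right nhdsWithin_le_nhds
      exact h5.comp (hat.atTop_div_const hs)
  have h1 := integral_Ioi_of_hasDerivAt_of_nonneg' hF hpos hlim
  have h2 := integrableOn_Ioi_deriv_of_nonneg' hF hpos hlim
  have h3 : 0 + l * (π / 2) / (2 * s ^ 3) - F 0 =
      1 / (2 * s ^ 2) + l * (π / 2 + Real.arctan (l / s)) / (2 * s ^ 3) := by
    have : F 0 = (l * (- l) / s ^ 2 - 1) / 2 + l * (-Real.arctan (l / s)) / (2 * s ^ 3) := by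
      simp only [F]
      rw [zero_sub, neg_div, Real.arctan_neg]
      norm_num
    rw [this]
    field_simp
    linear_combination 2 * s * hls
  rw [h3] at h1
  refine ⟨?_, h1 ▸ setIntegral_nonneg measurableSet_Ioi hpos⟩
  rw [← ofReal_integral_eq_lintegral_ofReal h2, h1]
  filter_upwards [ae_restrict_mem measurableSet_Ioi] with u hu
  exact hpos u hu

lemma acK_scale (g : ℝ → ENNReal) {u : ℝ} (hu : 0 < u) :
    ∫⁻ v in Set.Ioi (0:ℝ), g v = ∫⁻ t in Set.Ioi (0:ℝ), ENNReal.ofReal u * g (u * t) := by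
  have h := lintegral_image_eq_lintegral_abs_deriv_mul (s := Set.Ioi (0:ℝ))
    (f := fun t => u * t) (f' := fun _ => u) measurableSet_Ioi
    (fun t _ => by simpa using ((hasDerivAt_id t).const_mul u).hasDerivWithinAt)
    (fun a _ b _ hab => mul_left_cancel₀ hu.ne' hab) g
  have e : (fun t => u * t) '' Set.Ioi (0:ℝ) = Set.Ioi 0 := by
    rw [Set.image_mul_left_Ioi hu, mul_zero]
  rw [e, abs_of_pos hu] at h
  exact h

/-- first-order arc-cosine kernel identity. For `λ ∈ (−1,1)`, the bivariate
Gaussian expectation of the product of ReLUs has the closed form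
`E[σ(u)σ(v)] = (λ·(π − arccos λ) + √(1 − λ²))/(2π)`. -/
theorem arccos_kernel_first_order (l : ℝ) (hl : l ∈ Set.Ioo (-1 : ℝ) 1) :
    (1 / (2 * Real.pi * Real.sqrt (1 - l ^ 2))) *
        ∫ p : ℝ × ℝ, max p.1 0 * max p.2 0 *
          Real.exp (-(p.1 ^ 2 - 2 * l * p.1 * p.2 + p.2 ^ 2) / (2 * (1 - l ^ 2))) =
      (l * (Real.pi - Real.arccos l) + Real.sqrt (1 - l ^ 2)) / (2 * Real.pi) := by
  obtain ⟨hl1, hl2⟩ := hl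
  have hc : 0 < 1 - l ^ 2 := by nlinarith
  obtain ⟨s, hsdef⟩ : ∃ s, s = Real.sqrt (1 - l ^ 2) := ⟨_, rfl⟩
  have hs : 0 < s := hsdef ▸ Real.sqrt_pos.2 hc
  have hs2 : s ^ 2 = 1 - l ^ 2 := by rw [hsdef, Real.sq_sqrt hc.le]
  have hls : l ^ 2 + s ^ 2 = 1 := by linarith
  have hasin : Real.arctan (l / s) = π / 2 - Real.arccos l := by
    rw [hsdef, ← Real.arcsin_eq_arctan ⟨hl1, hl2⟩, Real.arccos]
    ring
  have hD : ∀ t : ℝ, 0 < 1 - 2 * l * t + t ^ 2 := fun t => by nlinarith [sq_nonneg (t - l)]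
  rw [← hsdef, ← hs2]
  have key : ∫⁻ p : ℝ × ℝ, ENNReal.ofReal (max p.1 0 * max p.2 0 *
          Real.exp (-(p.1 ^ 2 - 2 * l * p.1 * p.2 + p.2 ^ 2) / (2 * s ^ 2))) =
      ENNReal.ofReal (2 * s ^ 4) * ENNReal.ofReal
        (1 / (2 * s ^ 2) + l * (π / 2 + Real.arctan (l / s)) / (2 * s ^ 3)) := by
    rw [← (acK_outer hs hls).1, Measure.volume_eq_prod, lintegral_prod _ (by fun_prop)]
    have r : ∀ g : ℝ → ENNReal, (∀ x ≤ 0, g x = 0) → ∫⁻ x, g x = ∫⁻ x in Set.Ioi 0, g x := by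
      intro g hg
      symm
      apply setLIntegral_eq_of_support_subset
      intro x hx
      by_contra h
      exact hx (hg x (not_lt.1 h))
    rw [r _ (fun x hx => by simp [max_eq_right hx])]
    calc _ = ∫⁻ u in Set.Ioi (0:ℝ), ∫⁻ t in Set.Ioi (0:ℝ), ENNReal.ofReal t * ENNReal.ofReal
          (u ^ 3 * Real.exp (-((1 - 2 * l * t + t ^ 2) / (2 * s ^ 2)) * u ^ 2)) := by
          refine setLIntegral_congr_fun measurableSet_Ioi (fun u hu => ?_)
          have hu : 0 < u := hu
          rw [r _ (fun x hx => by simp [max_eq_right hx]), acK_scale _ hu]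
          refine setLIntegral_congr_fun measurableSet_Ioi (fun t ht => ?_)
          have ht : 0 < t := ht
          rw [← ENNReal.ofReal_mul hu.le, ← ENNReal.ofReal_mul ht.le, max_eq_left hu.le,
            max_eq_left (by positivity)]
          have e : -(u ^ 2 - 2 * l * u * (u * t) + (u * t) ^ 2) / (2 * s ^ 2) =
            -((1 - 2 * l * t + t ^ 2) / (2 * s ^ 2)) * u ^ 2 := by ring
          rw [e]
          congr 1
          ring
      _ = ∫⁻ t in Set.Ioi (0:ℝ), ∫⁻ u in Set.Ioi (0:ℝ), ENNReal.ofReal t * ENNReal.ofReal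
          (u ^ 3 * Real.exp (-((1 - 2 * l * t + t ^ 2) / (2 * s ^ 2)) * u ^ 2)) := by
          apply lintegral_lintegral_swap
          apply Measurable.aemeasurable
          unfold Function.uncurry
          fun_prop
      _ = ∫⁻ t in Set.Ioi (0:ℝ), ENNReal.ofReal (2 * s ^ 4) *
            ENNReal.ofReal (t / (1 - 2 * l * t + t ^ 2) ^ 2) := by
          refine setLIntegral_congr_fun measurableSet_Ioi (fun t ht => ?_)
          have ht : 0 < t := ht
          have hDt := hD t
          rw [lintegral_const_mul _ (by fun_prop), acK_inner (by positivity),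
            ← ENNReal.ofReal_mul ht.le, ← ENNReal.ofReal_mul (by positivity)]
          congr 1
          field_simp
      _ = _ := lintegral_const_mul _ (by fun_prop)
  have hnn : 0 ≤ 1 / (2 * s ^ 2) + l * (π / 2 + Real.arctan (l / s)) / (2 * s ^ 3) :=
    (acK_outer hs hls).2
  rw [integral_eq_lintegral_of_nonneg_ae (Filter.Eventually.of_forall fun p => by
    simp only [Pi.zero_apply]; positivity) (by fun_prop), key,
    ← ENNReal.ofReal_mul (by positivity), ENNReal.toReal_ofReal (by positivity), hasin]
  field_simp
  ring
end

section
/- Let d ≥ 2 and β ≥ 0, and define k : [−1,1] → ℝ by k(u) = (1/π)·((2u + β²)·(π − arccos u) + √(1 − u²)) + β². Then (x,z) ↦ k(⟨x,z⟩) is a positive semidefinite kernel on the unit sphere S^{d-1} ⊂ ℝ^d: for every n ∈ ℕ, every x₁, …, xₙ ∈ S^{d-1} and every c₁, …, cₙ ∈ ℝ, ∑_{i,j} c_i c_j k(⟨x_i, x_j⟩) ≥ 0. -/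
open Real
open scoped RealInnerProductSpace

/-- Coefficients of `(1 - x)^(-1/2)` are nonnegative. -/
theorem ntk_coeff_nonneg (m : ℕ) : 0 ≤ Ring.choose ((1 / 2 : ℝ) + m - 1) m := by
  rw [← Ring.multichoose_eq]
  have h := Ring.factorial_nsmul_multichoose_eq_ascPochhammer (1 / 2 : ℝ) m
  rw [Polynomial.ascPochhammer_smeval_eq_eval] at h
  have h2 : 0 < (ascPochhammer ℝ m).eval (1 / 2 : ℝ) := ascPochhammer_pos m _ (by norm_num)
  rw [← h, nsmul_eq_mul] at h2
  exact (pos_of_mul_pos_right h2 (by positivity)).le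

theorem ntk_hasSum (w : ℝ) (h0 : 0 ≤ w) (h1 : w < 1) :
    HasSum (fun m : ℕ => Ring.choose ((1 / 2 : ℝ) + m - 1) m * w ^ m) (1 / √(1 - w)) := by
  have h := (Real.one_div_one_sub_rpow_hasFPowerSeriesOnBall_zero (1 / 2)).hasSum
    (y := w) (by simpa [Real.enorm_eq_ofReal h0] using h1)
  rw [Real.sqrt_eq_rpow]
  simpa [FormalMultilinearSeries.ofScalars, mul_comm] using h

/-- Quadratic-form positivity. -/
def NtkPSD {n : ℕ} (A : Fin n → Fin n → ℝ) : Prop :=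
  ∀ c : Fin n → ℝ, 0 ≤ ∑ i, ∑ j, c i * c j * A i j

theorem ntk_gram_mul {n d : ℕ} (x : Fin n → EuclideanSpace ℝ (Fin d)) (A : Fin n → Fin n → ℝ)
    (hA : NtkPSD A) : NtkPSD (fun i j => ⟪x i, x j⟫ * A i j) := by
  intro c
  have : ∑ i, ∑ j, c i * c j * (⟪x i, x j⟫ * A i j) =
      ∑ k, ∑ i, ∑ j, (c i * x i k) * (c j * x j k) * A i j := by
    rw [Finset.sum_comm]
    simp_rw [Finset.sum_comm (s := (Finset.univ : Finset (Fin d)))]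
    rw [Finset.sum_comm]
    refine Finset.sum_congr rfl fun i _ => Finset.sum_congr rfl fun j _ => ?_
    rw [PiLp.inner_apply, Finset.sum_mul, Finset.mul_sum]
    refine Finset.sum_congr rfl fun k _ => ?_
    simp only [RCLike.inner_apply, conj_trivial]
    ring
  rw [this]
  exact Finset.sum_nonneg fun k _ => hA _

theorem ntk_one {n : ℕ} : NtkPSD (fun _ _ : Fin n => (1 : ℝ)) := by
  intro c
  have : ∑ i, ∑ j, c i * c j * (1 : ℝ) = (∑ i, c i) * (∑ i, c i) := by
    rw [Finset.sum_mul_sum]; simp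
  rw [this]
  exact mul_self_nonneg _

theorem ntk_smul {n : ℕ} {A : Fin n → Fin n → ℝ} (hA : NtkPSD A) {a : ℝ} (ha : 0 ≤ a) :
    NtkPSD (fun i j => a * A i j) := by
  intro c
  have : ∑ i, ∑ j, c i * c j * (a * A i j) = a * ∑ i, ∑ j, c i * c j * A i j := by
    simp_rw [Finset.mul_sum]
    refine Finset.sum_congr rfl fun i _ => Finset.sum_congr rfl fun j _ => ?_
    ring
  rw [this]
  exact mul_nonneg ha (hA c)

theorem ntk_add {n : ℕ} {A B : Fin n → Fin n → ℝ} (hA : NtkPSD A) (hB : NtkPSD B) :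
    NtkPSD (fun i j => A i j + B i j) := by
  intro c
  simp_rw [mul_add, Finset.sum_add_distrib]
  exact add_nonneg (hA c) (hB c)

theorem ntk_pow {n d : ℕ} (x : Fin n → EuclideanSpace ℝ (Fin d)) (m : ℕ) :
    NtkPSD (fun i j => ⟪x i, x j⟫ ^ m) := by
  induction m with
  | zero => simpa using ntk_one
  | succ m ih => simpa only [pow_succ'] using ntk_gram_mul x _ ih

theorem ntk_abs_inner {n d : ℕ} (x : Fin n → EuclideanSpace ℝ (Fin d)) (hx : ∀ i, ‖x i‖ = 1)
    (i j : Fin n) : |⟪x i, x j⟫| ≤ 1 := by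
  simpa [hx] using abs_real_inner_le_norm (x i) (x j)

theorem ntk_abs_lt {n d : ℕ} (x : Fin n → EuclideanSpace ℝ (Fin d)) (hx : ∀ i, ‖x i‖ = 1)
    {r : ℝ} (h0 : 0 ≤ r) (h1 : r < 1) (i j : Fin n) : |r * ⟪x i, x j⟫| < 1 := by
  rw [abs_mul, abs_of_nonneg h0]
  have := ntk_abs_inner x hx i j
  nlinarith [abs_nonneg ⟪x i, x j⟫]

theorem ntk_inv_sqrt {n d : ℕ} (x : Fin n → EuclideanSpace ℝ (Fin d)) (hx : ∀ i, ‖x i‖ = 1)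
    {r : ℝ} (h0 : 0 ≤ r) (h1 : r < 1) :
    NtkPSD (fun i j => 1 / √(1 - (r * ⟪x i, x j⟫) ^ 2)) := by
  intro c
  have hs : HasSum (fun m : ℕ => ∑ i, ∑ j, c i * c j *
      (Ring.choose ((1 / 2 : ℝ) + m - 1) m * ((r * ⟪x i, x j⟫) ^ 2) ^ m))
      (∑ i, ∑ j, c i * c j * (1 / √(1 - (r * ⟪x i, x j⟫) ^ 2))) := by
    refine hasSum_sum fun i _ => hasSum_sum fun j _ => HasSum.mul_left _ ?_
    refine ntk_hasSum _ (sq_nonneg _) ?_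
    rw [sq_lt_one_iff_abs_lt_one]
    exact ntk_abs_lt x hx h0 h1 i j
  refine hs.nonneg fun m => ?_
  have := ntk_smul (ntk_pow x (2 * m)) (a := Ring.choose ((1 / 2 : ℝ) + m - 1) m * r ^ (2 * m))
    (mul_nonneg (ntk_coeff_nonneg m) (by positivity)) c
  simpa only [← pow_mul, mul_pow, mul_assoc] using this

theorem ntk_deriv {n : ℕ} (u : Fin n → Fin n → ℝ) (f : ℝ → ℝ) (f' : ℝ → ℝ)
    (hf : Continuous f) (hu : ∀ r, 0 ≤ r → r < 1 → ∀ i j, |r * u i j| < 1)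
    (hd : ∀ y, |y| < 1 → HasDerivAt f (f' y) y)
    (h0 : NtkPSD (fun _ _ : Fin n => f 0))
    (hP : ∀ r, 0 ≤ r → r < 1 → NtkPSD (fun i j => u i j * f' (r * u i j))) :
    ∀ r, 0 ≤ r → r ≤ 1 → NtkPSD (fun i j => f (r * u i j)) := by
  intro r hr0 hr1 c
  let F : ℝ → ℝ := fun s => ∑ i, ∑ j, c i * c j * f (s * u i j)
  have hF : ∀ s, 0 ≤ s → s < 1 →
      HasDerivAt F (∑ i, ∑ j, c i * c j * (u i j * f' (s * u i j))) s := by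
    intro s hs0 hs1
    refine HasDerivAt.fun_sum fun i _ => HasDerivAt.fun_sum fun j _ => HasDerivAt.const_mul _ ?_
    have h1 : HasDerivAt (fun s : ℝ => s * u i j) (u i j) s := by
      simpa using (hasDerivAt_id s).mul_const (u i j)
    have := (hd _ (hu s hs0 hs1 i j)).comp s h1
    rw [mul_comm]
    exact this
  have hmono : MonotoneOn F (Set.Icc 0 1) := by
    apply monotoneOn_of_deriv_nonneg (convex_Icc 0 1)
    · apply Continuous.continuousOn
      fun_prop
    · intro s hs
      rw [interior_Icc] at hs
      exact (hF s hs.1.le hs.2).differentiableAt.differentiableWithinAt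
    · intro s hs
      rw [interior_Icc] at hs
      rw [(hF s hs.1.le hs.2).deriv]
      exact hP s hs.1.le hs.2 c
  have h1 := hmono (Set.left_mem_Icc.2 zero_le_one) (Set.mem_Icc.2 ⟨hr0, hr1⟩) hr0
  refine le_trans ?_ h1
  simpa [F] using h0 c

theorem ntk_arcsin {n d : ℕ} (x : Fin n → EuclideanSpace ℝ (Fin d)) (hx : ∀ i, ‖x i‖ = 1) :
    ∀ r, 0 ≤ r → r ≤ 1 → NtkPSD (fun i j => arcsin (r * ⟪x i, x j⟫)) := by
  refine ntk_deriv (fun i j => ⟪x i, x j⟫) arcsin (fun y => 1 / √(1 - y ^ 2))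
    continuous_arcsin (fun r h0 h1 i j => ntk_abs_lt x hx h0 h1 i j) ?_ ?_ ?_
  · intro y hy
    rw [abs_lt] at hy
    exact hasDerivAt_arcsin hy.1.ne' hy.2.ne
  · intro c; simp
  · intro r h0 h1
    exact ntk_gram_mul x _ (ntk_inv_sqrt x hx h0 h1)

theorem ntk_g {n d : ℕ} (x : Fin n → EuclideanSpace ℝ (Fin d)) (hx : ∀ i, ‖x i‖ = 1) :
    ∀ r, 0 ≤ r → r ≤ 1 → NtkPSD (fun i j =>
      (fun y => y * arcsin y + √(1 - y ^ 2)) (r * ⟪x i, x j⟫)) := by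
  refine ntk_deriv (fun i j => ⟪x i, x j⟫) (fun y => y * arcsin y + √(1 - y ^ 2)) arcsin
    (by fun_prop) (fun r h0 h1 i j => ntk_abs_lt x hx h0 h1 i j) ?_ ?_ ?_
  · intro y hy
    have hpos : 0 < 1 - y ^ 2 := by
      have := (sq_lt_one_iff_abs_lt_one y).2 hy
      linarith
    rw [abs_lt] at hy
    have h1 := (hasDerivAt_id y).mul (hasDerivAt_arcsin hy.1.ne' hy.2.ne)
    have h2 := (((hasDerivAt_id y).pow 2).const_sub 1).sqrt (by simpa using hpos.ne')
    have hne := (Real.sqrt_pos.2 hpos).ne'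
    refine (h1.add h2).congr_deriv ?_
    simp only [id, Pi.pow_apply]
    field_simp
    ring
  · simpa using ntk_one
  · intro r h0 h1
    exact ntk_gram_mul x _ (ntk_arcsin x hx r h0 h1.le)

/-- The closed-form two-layer NTK
`k(u) = (1/π)·((2u + β²)·(π − arccos u) + √(1 − u²)) + β²` defines a positive semidefinite
kernel `(x,z) ↦ k(⟪x,z⟫)` on the unit sphere `S^{d-1} ⊂ ℝ^d`. -/
theorem ntk_two_layer_psd (d : ℕ) (hd : 2 ≤ d) (β : ℝ) (hβ : 0 ≤ β)
    (n : ℕ) (x : Fin n → EuclideanSpace ℝ (Fin d)) (hx : ∀ i, ‖x i‖ = 1) (c : Fin n → ℝ) :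
    0 ≤ ∑ i, ∑ j, c i * c j *
      ((1 / Real.pi) * ((2 * ⟪x i, x j⟫ + β ^ 2) * (Real.pi - Real.arccos ⟪x i, x j⟫) +
          Real.sqrt (1 - ⟪x i, x j⟫ ^ 2)) + β ^ 2) := by
  have hA := ntk_arcsin x hx 1 zero_le_one le_rfl
  have hG := ntk_g x hx 1 zero_le_one le_rfl
  simp only [one_mul] at hA hG
  have hp := Real.pi_pos
  have hU := ntk_pow x 1
  have h1 := ntk_smul (ntk_add (ntk_add (ntk_add hG (ntk_gram_mul x _ hA))
    (ntk_smul hA (sq_nonneg β))) (ntk_smul hU hp.le)) (a := 1 / π) (by positivity)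
  have h2 := ntk_smul (ntk_one (n := n)) (a := β ^ 2 / 2 + β ^ 2) (by positivity)
  refine (ntk_add h1 h2 c).trans_eq ?_
  refine Finset.sum_congr rfl fun i _ => Finset.sum_congr rfl fun j _ => ?_
  rw [Real.arccos]
  field_simp
  ring
end

section
/- Let d ≥ 1 be an integer and c > 0. For every w ∈ ℝ^d, ∫_{ℝ^d} e^{−c‖x‖} e^{−i⟨w,x⟩} dx = (2π)^d · (Γ((d+1)/2)/π^{(d+1)/2}) · c / (c² + ‖w‖²)^{(d+1)/2}. Equivalently, the Fourier transform Φ(w) = (1/(2π)^d) ∫_{ℝ^d} e^{−c‖x‖} e^{−i⟨x,w⟩} dx of the radial function f(x) = e^{−c‖x‖} equals C·(1 + ‖w‖²/c²)^{−(d+1)/2} with C = Γ((d+1)/2)/(π^{(d+1)/2} c^d) > 0. -/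
open Real MeasureTheory
open scoped RealInnerProductSpace

section Aux
open Set

lemma glasser_integrable (b : ℝ) :
    IntegrableOn (fun t : ℝ => Real.exp (-t^2 - b^2/t^2)) (Ioi 0) := by
  have h : IntegrableOn (fun t : ℝ => Real.exp (-1 * t^2)) (Ioi 0) :=
    (integrable_exp_neg_mul_sq one_pos).integrableOn
  refine Integrable.mono' h ?_ ?_
  · exact (Measurable.aestronglyMeasurable (by fun_prop))
  · refine Filter.Eventually.of_forall fun t => ?_
    rw [Real.norm_eq_abs, abs_of_pos (Real.exp_pos _)]
    apply Real.exp_le_exp.2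
    have : 0 ≤ b^2/t^2 := by positivity
    linarith

lemma glasser_pos (b : ℝ) (hb : 0 < b) :
    ∫ t in Ioi (0:ℝ), Real.exp (-t^2 - b^2/t^2) = √π / 2 * Real.exp (-2*b) := by
  have hm : MeasurableSet (Ioi (0:ℝ)) := measurableSet_Ioi
  -- inversion
  have him1 : (fun t : ℝ => b / t) '' Ioi 0 = Ioi 0 := by
    ext y; constructor
    · rintro ⟨t, ht, rfl⟩
      exact div_pos hb ht
    · intro hy
      refine ⟨b / y, div_pos hb hy, ?_⟩
      have : y ≠ 0 := ne_of_gt hy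
      simp only
      field_simp
  have hd1 : ∀ t ∈ Ioi (0:ℝ), HasDerivWithinAt (fun t : ℝ => b / t) (-(b/t^2)) (Ioi 0) t := by
    intro t ht
    have h0 : t ≠ 0 := ne_of_gt ht
    have := ((hasDerivAt_inv h0).const_mul b).hasDerivWithinAt (s := Ioi 0)
    convert! this using 1
    field_simp
  have hi1 : InjOn (fun t : ℝ => b / t) (Ioi 0) := by
    intro x hx y hy h
    have : x ≠ 0 := ne_of_gt hx
    have : y ≠ 0 := ne_of_gt hy
    simp only at h
    field_simp at h
    exact h.symm
  have e1 := integral_image_eq_integral_abs_deriv_smul hm hd1 hi1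
    (fun t => Real.exp (-t^2 - b^2/t^2))
  have g1 := (integrableOn_image_iff_integrableOn_abs_deriv_smul hm hd1 hi1
    (fun t => Real.exp (-t^2 - b^2/t^2))).1 (by rw [him1]; exact glasser_integrable b)
  rw [him1] at e1
  -- t - b/t
  have hd2 : ∀ t ∈ Ioi (0:ℝ), HasDerivWithinAt (fun t : ℝ => t - b / t) (1 + b/t^2) (Ioi 0) t := by
    intro t ht
    have := (hasDerivWithinAt_id t (Ioi 0)).sub (hd1 t ht)
    convert! this using 1
    ring
  have hi2 : InjOn (fun t : ℝ => t - b / t) (Ioi 0) := by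
    intro x hx y hy h
    have h1 : x ≠ 0 := ne_of_gt hx
    have h2 : y ≠ 0 := ne_of_gt hy
    simp only at h
    field_simp at h
    have : (x - y) * (x * y + b) = 0 := by linarith
    rcases mul_eq_zero.1 this with h | h
    · linarith
    · have : 0 < x * y := mul_pos hx hy
      linarith
  have him2 : (fun t : ℝ => t - b / t) '' Ioi 0 = univ := by
    refine eq_univ_of_forall fun y => ?_
    have hs : √(y^2+4*b)^2 = y^2+4*b := Real.sq_sqrt (by positivity)
    have hp : 0 < y + √(y^2+4*b) := by
      have : |y| < √(y^2+4*b) := by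
        rw [← Real.sqrt_sq_eq_abs]
        exact Real.sqrt_lt_sqrt (by positivity) (by linarith)
      linarith [neg_abs_le y]
    refine ⟨(y + √(y^2+4*b))/2, by simpa using hp, ?_⟩
    simp only
    field_simp
    nlinarith
  have e2 := integral_image_eq_integral_abs_deriv_smul hm hd2 hi2
    (fun t => Real.exp (-1 * t^2))
  rw [him2, setIntegral_univ, integral_gaussian] at e2
  have e3 : ∫ t in Ioi (0:ℝ), |1 + b/t^2| • Real.exp (-1 * (t - b/t)^2) =
      ∫ t in Ioi (0:ℝ), Real.exp (2*b) * (Real.exp (-t^2 - b^2/t^2) +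
        |-(b/t^2)| • Real.exp (-(b/t)^2 - b^2/(b/t)^2)) := by
    refine setIntegral_congr_fun hm fun t ht => ?_
    have h0 : t ≠ 0 := ne_of_gt ht
    have q : 0 ≤ b/t^2 := by positivity
    have a1 : -1 * (t - b/t)^2 = 2*b + (-t^2 - b^2/t^2) := by field_simp; ring
    have a2 : -(b/t)^2 - b^2/(b/t)^2 = (-t^2 - b^2/t^2) := by field_simp; ring
    simp only [smul_eq_mul]
    rw [a1, a2, abs_neg, abs_of_nonneg q, abs_of_nonneg (by linarith), Real.exp_add]
    ring
  rw [e3, integral_const_mul, integral_add (glasser_integrable b) g1, ← e1, div_one] at e2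
  have : Real.exp (-2*b) * Real.exp (2*b) = 1 := by rw [← Real.exp_add]; simp
  rw [e2]
  linear_combination (-(∫ t in Ioi (0:ℝ), Real.exp (-t^2 - b^2/t^2))) * this

lemma glasser (b : ℝ) (hb : 0 ≤ b) :
    ∫ t in Ioi (0:ℝ), Real.exp (-t^2 - b^2/t^2) = √π / 2 * Real.exp (-2*b) := by
  rcases hb.eq_or_lt with rfl | h
  · have := integral_gaussian_Ioi 1
    simpa using this
  · exact glasser_pos b h
lemma inner_norm_integral (d : ℕ) (c t : ℝ) (hc : 0 < c) (ht : 0 < t) :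
    ∫ x : EuclideanSpace ℝ (Fin d), Real.exp (-t^2) * Real.exp (-(c^2/(4*t^2)) * ‖x‖^2) =
     (2 * √π / c) ^ d * (t ^ (d:ℝ) * Real.exp (-1 * t^2)) := by
  rw [integral_const_mul, GaussianFourier.integral_rexp_neg_mul_sq_norm (by positivity)]
  have : π / (c^2/(4*t^2)) = (2 * √π / c * t)^2 := by
    have := Real.sq_sqrt pi_pos.le
    field_simp
    rw [this]; ring
  rw [this, finrank_euclideanSpace_fin, ← Real.rpow_natCast (_ * t) 2,
    ← Real.rpow_mul (by positivity)]
  have h2 : ((2:ℕ):ℝ) * ((d:ℝ)/2) = (d:ℝ) := by push_cast; ring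
  rw [h2, Real.rpow_natCast, Real.rpow_natCast, mul_pow]
  ring_nf

lemma inner_integral (d : ℕ) (c t : ℝ) (hc : 0 < c) (ht : 0 < t)
    (w : EuclideanSpace ℝ (Fin d)) :
    ∫ x : EuclideanSpace ℝ (Fin d), Complex.exp (-(t:ℂ)^2) *
      Complex.exp (-((c^2/(4*t^2) : ℝ) : ℂ) * (‖x‖:ℂ)^2 + (-Complex.I) * (⟪w, x⟫ : ℝ)) =
     (((2 * √π / c) ^ d * (t ^ (d:ℝ) * Real.exp (-(1 + ‖w‖^2/c^2) * t^(2:ℝ))) : ℝ) : ℂ) := by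
  have hb : 0 < c^2/(4*t^2) := by positivity
  rw [integral_const_mul, GaussianFourier.integral_cexp_neg_mul_sq_norm_add
    (by rw [Complex.ofReal_re]; exact hb)]
  have : π / (c^2/(4*t^2)) = (2 * √π / c * t)^2 := by
    have := Real.sq_sqrt pi_pos.le
    field_simp
    rw [this]; ring
  have e1 : ((π:ℂ) / ((c^2/(4*t^2) : ℝ) : ℂ)) ^ ((Module.finrank ℝ (EuclideanSpace ℝ (Fin d)) : ℂ) / 2)
      = (((2 * √π / c * t)^d : ℝ) : ℂ) := by
    rw [finrank_euclideanSpace_fin, ← Complex.ofReal_div, this,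
      show ((d:ℂ)/2) = ((d/2 : ℝ) : ℂ) by push_cast; rfl,
      ← Complex.ofReal_cpow (by positivity), ← Real.rpow_natCast (_ * t) 2,
      ← Real.rpow_mul (by positivity)]
    have h2 : ((2:ℕ):ℝ) * ((d:ℝ)/2) = (d:ℝ) := by push_cast; ring
    rw [h2, Real.rpow_natCast]
  have e2 : (-Complex.I) ^ 2 * (‖w‖:ℂ) ^ 2 / (4 * ((c^2/(4*t^2) : ℝ) : ℂ)) =
      ((-(‖w‖^2/c^2) * t^2 : ℝ) : ℂ) := by
    rw [neg_sq, Complex.I_sq]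
    have : (c:ℂ) ≠ 0 := by exact_mod_cast hc.ne'
    have : (t:ℂ) ≠ 0 := by exact_mod_cast ht.ne'
    push_cast
    field_simp
  have e3 : (-(t:ℂ)^2) = ((-t^2 : ℝ) : ℂ) := by push_cast; rfl
  rw [e1, e2, e3, ← Complex.ofReal_exp, ← Complex.ofReal_exp, ← Complex.ofReal_mul,
    ← Complex.ofReal_mul]
  congr 1
  rw [Real.rpow_natCast, Real.rpow_two, mul_pow,
    show -(1 + ‖w‖^2/c^2) * t^2 = -t^2 + (-(‖w‖^2/c^2) * t^2) by ring, Real.exp_add]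
  ring

lemma subordination {d : ℕ} (c : ℝ) (hc : 0 < c) (w x : EuclideanSpace ℝ (Fin d)) :
    (Real.exp (-c * ‖x‖) : ℂ) * Complex.exp (-Complex.I * (⟪w, x⟫ : ℝ)) =
    ((2 / √π : ℝ) : ℂ) * ∫ t in Ioi (0:ℝ), Complex.exp (-(t:ℂ)^2) *
      Complex.exp (-((c^2/(4*t^2) : ℝ) : ℂ) * (‖x‖:ℂ)^2 + (-Complex.I) * (⟪w, x⟫ : ℝ)) := by
  have hg := glasser (c * ‖x‖ / 2) (by positivity)
  have e : ∀ t : ℝ, Complex.exp (-(t:ℂ)^2) *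
      Complex.exp (-((c^2/(4*t^2) : ℝ) : ℂ) * (‖x‖:ℂ)^2 + (-Complex.I) * (⟪w, x⟫ : ℝ)) =
      ((Real.exp (-t^2 - (c * ‖x‖ / 2)^2/t^2) : ℝ) : ℂ) *
        Complex.exp ((-Complex.I) * (⟪w, x⟫ : ℝ)) := by
    intro t
    rw [Complex.ofReal_exp, ← Complex.exp_add, ← Complex.exp_add]
    congr 1
    push_cast
    ring
  simp_rw [e]
  rw [integral_mul_const, integral_complex_ofReal, hg, ← mul_assoc, ← Complex.ofReal_mul]
  have : √π ≠ 0 := by positivity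
  congr 2
  rw [show -2 * (c * ‖x‖ / 2) = -c * ‖x‖ by ring]
  field_simp

lemma prod_integrable (d : ℕ) (c : ℝ) (hc : 0 < c) (w : EuclideanSpace ℝ (Fin d)) :
    Integrable (Function.uncurry fun (x : EuclideanSpace ℝ (Fin d)) (t : ℝ) =>
      Complex.exp (-(t:ℂ)^2) *
      Complex.exp (-((c^2/(4*t^2) : ℝ) : ℂ) * (‖x‖:ℂ)^2 + (-Complex.I) * (⟪w, x⟫ : ℝ)))
      (volume.prod (volume.restrict (Ioi (0:ℝ)))) := by
  have hmeas : Measurable (Function.uncurry fun (x : EuclideanSpace ℝ (Fin d)) (t : ℝ) =>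
      Complex.exp (-(t:ℂ)^2) *
      Complex.exp (-((c^2/(4*t^2) : ℝ) : ℂ) * (‖x‖:ℂ)^2 + (-Complex.I) * (⟪w, x⟫ : ℝ))) := by
    unfold Function.uncurry
    fun_prop
  rw [integrable_prod_iff' hmeas.aestronglyMeasurable]
  constructor
  · refine (ae_restrict_iff' measurableSet_Ioi).2 (Filter.Eventually.of_forall fun t ht => ?_)
    have ht' : 0 < t := ht
    have hb : 0 < c^2/(4*t^2) := by positivity
    have hb' : 0 < (((c^2/(4*t^2) : ℝ) : ℂ)).re := by rw [Complex.ofReal_re]; exact hb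
    have key := GaussianFourier.integrable_cexp_neg_mul_sq_norm_add
      (V := EuclideanSpace ℝ (Fin d)) hb' (-Complex.I) w
    have key2 := key.const_mul (Complex.exp (-(t:ℂ)^2))
    simp only [Function.uncurry_apply_pair]
    exact key2
  · have hI : IntegrableOn (fun t : ℝ => (2 * √π / c) ^ d * (t ^ (d:ℝ) * Real.exp (-1 * t^2)))
        (Ioi 0) :=
      ((integrable_rpow_mul_exp_neg_mul_sq one_pos
        (by have : (0:ℝ) ≤ d := by positivity
            linarith)).const_mul _).integrableOn
    refine IntegrableOn.congr_fun hI (fun t ht => ?_) measurableSet_Ioi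
    rw [← inner_norm_integral d c t hc ht]
    congr 1
    ext x
    simp only [Function.uncurry, norm_mul, Complex.norm_exp]
    congr 2
    · rw [← Complex.ofReal_pow, ← Complex.ofReal_neg, Complex.ofReal_re]
    · rw [← Complex.ofReal_pow, ← Complex.ofReal_neg, ← Complex.ofReal_mul, Complex.add_re,
        Complex.ofReal_re]
      simp

end Aux

/-- Fourier transform of the radial profile of the Laplace kernel. For `c > 0`
and `w ∈ ℝ^d`,
`∫_{ℝ^d} e^{−c‖x‖} e^{−i⟨w,x⟩} dx = (2π)^d · (Γ((d+1)/2)/π^{(d+1)/2}) · c/(c² + ‖w‖²)^{(d+1)/2}`. -/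
theorem laplace_radial_fourier_transform (d : ℕ) (hd : 1 ≤ d) (c : ℝ) (hc : 0 < c)
    (w : EuclideanSpace ℝ (Fin d)) :
    ∫ x : EuclideanSpace ℝ (Fin d),
        (Real.exp (-c * ‖x‖) : ℂ) * Complex.exp (-Complex.I * (⟪w, x⟫ : ℝ)) =
      (((2 * Real.pi) ^ d * (Real.Gamma (((d : ℝ) + 1) / 2) / Real.pi ^ (((d : ℝ) + 1) / 2)) *
          c / (c ^ 2 + ‖w‖ ^ 2) ^ (((d : ℝ) + 1) / 2) : ℝ) : ℂ) := by
  simp_rw [subordination c hc w]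
  rw [integral_const_mul, integral_integral_swap (prod_integrable d c hc w),
    setIntegral_congr_fun measurableSet_Ioi (fun t ht => inner_integral d c t hc ht w),
    integral_complex_ofReal, integral_const_mul,
    integral_rpow_mul_exp_neg_mul_rpow two_pos
      (by have : (0:ℝ) ≤ d := by positivity
          linarith) (by positivity), ← Complex.ofReal_mul]
  congr 1
  have h1 : 1 + ‖w‖^2/c^2 = (c^2 + ‖w‖^2) / c^2 := by field_simp
  have h2 : (c^2)^(((d:ℝ)+1)/2) = c^d * c := by
    rw [← Real.rpow_natCast c 2, ← Real.rpow_mul hc.le,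
      show ((2:ℕ):ℝ) * (((d:ℝ)+1)/2) = ((d+1 : ℕ) : ℝ) by push_cast; ring, Real.rpow_natCast,
      pow_succ]
  have h3 : π^(((d:ℝ)+1)/2) = √π^d * √π := by
    rw [Real.sqrt_eq_rpow, ← pow_succ, ← Real.rpow_natCast, ← Real.rpow_mul pi_pos.le]
    congr 1; push_cast; ring
  have h4 : π ^ d = √π^d * √π^d := by
    rw [← mul_pow, Real.mul_self_sqrt pi_pos.le]
  rw [neg_div, Real.rpow_neg (by positivity), h1, Real.div_rpow (by positivity) (by positivity),
    h2, h3, mul_pow, h4, div_pow, mul_pow]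
  have : 0 < √π := by positivity
  have : 0 < (c^2 + ‖w‖^2)^(((d:ℝ)+1)/2) := by positivity
  field_simp
end
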